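/- Let d ∈ (−1, 0), λ_N > 0 with λ_N → 0 and Nλ_N → λ* ∈ [0, ∞), and let b_d(k) satisfy b_d(k) ~ (1/Γ(d)) k^{d−1} and Σ_{k=0}^∞ b_d(k) = 0. Then for each fixed y ∈ ℝ, (λ_N + iy/N)^d Σ_{k=0}^∞ e^{−(λ_N + iy/N)k} b_d(k) → 1 as N → ∞. -/

import Mathlib

open Real Filter Topology Complex

/-!
Let `a k` be the coefficients of `(1 - x) ^ (-d) = ∑ a k * x ^ k`. They satisfy
`a k ~ k ^ (d - 1) / Γ(d)` and sum to zero, and for them the claim reads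
`z ^ d * (1 - exp (-z)) ^ (-d) → 1` as `z → 0` in the right half-plane. The error `e = b - a` is
`o(a)` and also sums to zero, so `∑ exp (-z * k) * e k = ∑ (exp (-z * k) - 1) * e k`. Since
`‖exp (-w) - 1‖ ≤ 3 * (1 - exp (-‖w‖))` for `0 ≤ Re w`, this is controlled by
`∑ (1 - exp (-r * k)) * |a k|` with `r = ‖z‖`, and as all `a k` with `k ≥ 1` are negative, the
latter equals `(1 - exp (-r)) ^ (-d) ≤ r ^ (-d)`.
-/

open Asymptotics Finset

lemma multichoose_eq_prod_div_factorial {𝕜 : Type*} [Field 𝕜] [CharZero 𝕜] (a : 𝕜) (n : ℕ) :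
    Ring.multichoose a n = (∏ j ∈ range n, (a + j)) / (n.factorial : 𝕜) := by
  rw [eq_div_iff (Nat.cast_ne_zero.2 n.factorial_ne_zero), mul_comm, ← nsmul_eq_mul,
    Ring.factorial_nsmul_multichoose_eq_ascPochhammer, Polynomial.ascPochhammer_smeval_eq_eval]
  induction n with
  | zero => simp
  | succ n ih => rw [ascPochhammer_succ_eval, ih, prod_range_succ]

lemma sum_range_succ_multichoose {R : Type*} [Ring R] [BinomialRing R] (a : R) (n : ℕ) :
    ∑ k ∈ range (n + 1), Ring.multichoose a k = Ring.multichoose (a + 1) n := by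
  induction n with
  | zero => simp
  | succ n ih => rw [sum_range_succ, ih, Ring.multichoose_succ_succ, add_comm]

lemma multichoose_succ_lt_zero {𝕜 : Type*} [Field 𝕜] [LinearOrder 𝕜] [IsStrictOrderedRing 𝕜]
    {a : 𝕜} (ha1 : -1 < a) (ha0 : a < 0) (n : ℕ) : Ring.multichoose a (n + 1) < 0 := by
  have hpos : 0 < ∏ j ∈ range n, (a + ((j + 1 : ℕ) : 𝕜)) := prod_pos fun j _ ↦ by
    have : (0 : 𝕜) ≤ j := j.cast_nonneg
    push_cast
    linarith
  rw [multichoose_eq_prod_div_factorial, prod_range_succ', Nat.cast_zero, add_zero]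
  exact div_neg_of_neg_of_pos (mul_neg_of_pos_of_neg hpos ha0)
    (Nat.cast_pos.2 (n + 1).factorial_pos)

lemma isEquivalent_multichoose {a : ℝ} (ha : ∀ m : ℕ, a ≠ -m) :
    (fun n : ℕ ↦ Ring.multichoose a n) ~[atTop]
      fun n : ℕ ↦ 1 / Real.Gamma a * (n : ℝ) ^ (a - 1) := by
  have hΓ : Real.Gamma a ≠ 0 := Real.Gamma_ne_zero ha
  have hseq : Tendsto (fun n : ℕ ↦ Real.Gamma a * ((Real.GammaSeq a n)⁻¹ * (n / (n + a))))
      atTop (𝓝 1) := by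
    simpa [hΓ] using (((Real.GammaSeq_tendsto_Gamma a).inv₀ hΓ).mul
      (tendsto_natCast_div_add_atTop a)).const_mul (Real.Gamma a)
  refine isEquivalent_of_tendsto_one (hseq.congr' ?_)
  filter_upwards [eventually_gt_atTop 0] with n hn
  have hn' : (0 : ℝ) < n := Nat.cast_pos.2 hn
  have hna : a + n ≠ 0 := fun h ↦ ha n (eq_neg_of_add_eq_zero_left h)
  have hfac : (n.factorial : ℝ) ≠ 0 := Nat.cast_ne_zero.2 n.factorial_ne_zero
  have hpow : (n : ℝ) ^ a ≠ 0 := (Real.rpow_pos_of_pos hn' a).ne'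
  rw [Pi.div_apply, Real.GammaSeq, multichoose_eq_prod_div_factorial, prod_range_succ,
    Real.rpow_sub_one hn'.ne', add_comm (n : ℝ) a]
  field_simp

lemma hasSum_multichoose_zero {a : ℝ} (ha0 : a < 0) (ha : ∀ m : ℕ, a ≠ -m) :
    HasSum (fun n ↦ Ring.multichoose a n) 0 := by
  have hsum : Summable fun n ↦ Ring.multichoose a n :=
    (isEquivalent_multichoose ha).summable_iff_nat.2
      ((Real.summable_nat_rpow.2 (by linarith)).mul_left _)
  have hne : ∀ m : ℕ, a + 1 ≠ -m := fun m h ↦ ha (m + 1) (by push_cast; linarith)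
  have hpow : Tendsto (fun n : ℕ ↦ 1 / Real.Gamma (a + 1) * (n : ℝ) ^ (a + 1 - 1))
      atTop (𝓝 0) := by
    simpa using ((tendsto_rpow_neg_atTop (neg_pos.2 ha0)).comp
      tendsto_natCast_atTop_atTop).const_mul (1 / Real.Gamma (a + 1))
  have hpartial : Tendsto (fun n ↦ ∑ k ∈ range (n + 1), Ring.multichoose a k) atTop (𝓝 0) := by
    simpa only [sum_range_succ_multichoose] using
      (isEquivalent_multichoose hne).symm.tendsto_nhds hpow
  exact tendsto_nhds_unique ((tendsto_add_atTop_iff_nat 1).2 hsum.hasSum.tendsto_sum_nat)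
    hpartial ▸ hsum.hasSum

lemma hasSum_multichoose_mul_pow_cpow (a : ℂ) {x : ℂ} (hx : ‖x‖ < 1) :
    HasSum (fun n ↦ Ring.multichoose a n * x ^ n) ((1 - x) ^ (-a)) := by
  simpa [FormalMultilinearSeries.ofScalars, Ring.multichoose_eq, Complex.cpow_neg] using
    (one_div_one_sub_cpow_hasFPowerSeriesOnBall_zero a).hasSum (y := x)
      (by simpa [← ofReal_norm] using hx)

lemma hasSum_multichoose_mul_pow_rpow (a : ℝ) {x : ℝ} (hx : |x| < 1) :
    HasSum (fun n ↦ Ring.multichoose a n * x ^ n) ((1 - x) ^ (-a)) := by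
  have hx' : 0 ≤ 1 - x := by linarith [(abs_lt.1 hx).2]
  simpa [FormalMultilinearSeries.ofScalars, Ring.multichoose_eq, Real.rpow_neg hx'] using
    (Real.one_div_one_sub_rpow_hasFPowerSeriesOnBall_zero a).hasSum (y := x)
      (by simpa [← ofReal_norm] using hx)

lemma hasSum_exp_mul_multichoose (a : ℂ) {z : ℂ} (hz : 0 < z.re) :
    HasSum (fun k : ℕ ↦ Complex.exp (-z * k) * Ring.multichoose a k)
      ((1 - Complex.exp (-z)) ^ (-a)) := by
  have hlt : ‖Complex.exp (-z)‖ < 1 := by simpa [Complex.norm_exp] using hz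
  refine (hasSum_multichoose_mul_pow_cpow a hlt).congr_fun fun k ↦ ?_
  rw [← Complex.exp_nat_mul, mul_comm, mul_comm (k : ℂ)]

lemma ofReal_multichoose (a : ℝ) (n : ℕ) :
    ((Ring.multichoose a n : ℝ) : ℂ) = Ring.multichoose (a : ℂ) n :=
  Ring.map_multichoose ofRealHom a n

lemma ne_neg_natCast_of_mem_Ioo {d : ℝ} (hd : d ∈ Set.Ioo (-1) 0) (m : ℕ) : d ≠ -m := by
  rintro rfl
  obtain ⟨h1, h0⟩ := hd
  have hm0 : 0 < m := by exact_mod_cast neg_lt_zero.1 h0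
  have hm1 : m < 1 := by exact_mod_cast neg_lt_neg_iff.1 h1
  lia

lemma hasSum_one_sub_exp_mul_abs_multichoose {d r : ℝ} (hd : d ∈ Set.Ioo (-1) 0) (hr : 0 < r) :
    HasSum (fun k : ℕ ↦ (1 - Real.exp (-(r * k))) * |Ring.multichoose d k|)
      ((1 - Real.exp (-r)) ^ (-d)) := by
  have hx : |Real.exp (-r)| < 1 := by simpa using hr
  have h := (hasSum_multichoose_mul_pow_rpow d hx).sub
    (hasSum_multichoose_zero hd.2 (ne_neg_natCast_of_mem_Ioo hd))
  rw [sub_zero] at h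
  refine h.congr_fun fun k ↦ ?_
  rw [← Real.exp_nat_mul, mul_neg, mul_comm (k : ℝ)]
  cases k with
  | zero => simp
  | succ n =>
    rw [abs_of_neg (multichoose_succ_lt_zero hd.1 hd.2 n)]
    ring

lemma norm_exp_neg_sub_one_le_norm {w : ℂ} (hw : 0 ≤ w.re) : ‖Complex.exp (-w) - 1‖ ≤ ‖w‖ := by
  have hderiv : ∀ u ∈ {u : ℂ | 0 ≤ u.re}, HasDerivWithinAt (fun u ↦ Complex.exp (-u))
      (Complex.exp (-u) * -1) {u : ℂ | 0 ≤ u.re} u :=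
    fun u _ ↦ (hasDerivAt_neg u).cexp.hasDerivWithinAt
  simpa using (convex_halfSpace_re_ge 0).norm_image_sub_le_of_norm_hasDerivWithin_le hderiv
    (C := 1) (fun u hu ↦ by simpa [Complex.norm_exp] using hu) (x := 0) (by simp) hw

lemma norm_exp_neg_sub_one_le {w : ℂ} (hw : 0 ≤ w.re) :
    ‖Complex.exp (-w) - 1‖ ≤ 3 * (1 - Real.exp (-‖w‖)) := by
  have hle_two : ‖Complex.exp (-w) - 1‖ ≤ 2 := by
    have hexp : ‖Complex.exp (-w)‖ ≤ 1 := by simpa [Complex.norm_exp] using hw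
    linarith [norm_sub_le (Complex.exp (-w)) 1, norm_one (α := ℂ)]
  have hle_norm := norm_exp_neg_sub_one_le_norm hw
  have hinv : Real.exp (-‖w‖) ≤ 1 / (1 + ‖w‖) := by
    rw [Real.exp_neg, ← one_div]
    gcongr
    linarith [Real.add_one_le_exp ‖w‖]
  calc ‖Complex.exp (-w) - 1‖ ≤ 3 * ‖w‖ / (1 + ‖w‖) := by
        rw [le_div_iff₀ (by positivity)]
        nlinarith [norm_nonneg w]
    _ = 3 * (1 - 1 / (1 + ‖w‖)) := by
        field_simp
        ring
    _ ≤ 3 * (1 - Real.exp (-‖w‖)) := by gcongr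

lemma summable_exp_neg_mul_natCast_mul {z : ℂ} (hz : 0 ≤ z.re) {e : ℕ → ℂ} (he : Summable e) :
    Summable fun k : ℕ ↦ Complex.exp (-z * k) * e k := by
  refine Summable.of_norm_bounded he.norm fun k ↦ ?_
  have hexp : ‖Complex.exp (-z * k)‖ ≤ 1 := by
    simpa [Complex.norm_exp] using mul_nonneg hz k.cast_nonneg
  rw [norm_mul]
  exact mul_le_of_le_one_left (norm_nonneg _) hexp

lemma tsum_exp_mul_eq_tsum_exp_sub_one_mul {z : ℂ} (hz : 0 ≤ z.re) {e : ℕ → ℂ}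
    (he : HasSum e 0) :
    ∑' k : ℕ, Complex.exp (-z * k) * e k = ∑' k : ℕ, (Complex.exp (-z * k) - 1) * e k := by
  simp only [sub_mul, one_mul]
  rw [(summable_exp_neg_mul_natCast_mul hz he.summable).tsum_sub he.summable, he.tsum_eq, sub_zero]

lemma norm_tsum_exp_sub_one_mul_le {z : ℂ} (hz : 0 ≤ z.re) {e : ℕ → ℂ} {g : ℕ → ℝ}
    (hg : ∀ k, 0 ≤ g k) {K : ℕ} (hK : ∀ k ≥ K, ‖e k‖ ≤ g k) {G : ℝ}
    (hG : HasSum (fun k : ℕ ↦ (1 - Real.exp (-(‖z‖ * k))) * g k) G) :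
    ‖∑' k : ℕ, (Complex.exp (-z * k) - 1) * e k‖ ≤
      ‖z‖ * ∑ k ∈ range K, k * ‖e k‖ + 3 * G := by
  have hhead : HasSum (fun k : ℕ ↦ if k ∈ range K then ‖z‖ * (k * ‖e k‖) else 0)
      (‖z‖ * ∑ k ∈ range K, k * ‖e k‖) := by
    rw [mul_sum, sum_congr rfl fun k hk ↦ (if_pos hk).symm]
    exact hasSum_sum_of_ne_finset_zero fun k hk ↦ if_neg hk
  refine tsum_of_norm_bounded (hhead.add (hG.mul_left 3)) fun k ↦ ?_
  have hre : 0 ≤ (z * k).re := by simpa using mul_nonneg hz k.cast_nonneg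
  have hnorm : ‖z * k‖ = ‖z‖ * k := by simp
  have hgap : 0 ≤ 1 - Real.exp (-(‖z‖ * k)) := by simpa using (by positivity : 0 ≤ ‖z‖ * k)
  rw [norm_mul, neg_mul]
  split_ifs with hk
  · have hle := norm_exp_neg_sub_one_le_norm hre
    rw [hnorm] at hle
    calc ‖Complex.exp (-(z * k)) - 1‖ * ‖e k‖ ≤ ‖z‖ * k * ‖e k‖ := by gcongr
      _ ≤ ‖z‖ * (k * ‖e k‖) + 3 * ((1 - Real.exp (-(‖z‖ * k))) * g k) := by
        rw [mul_assoc]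
        exact le_add_of_nonneg_right (mul_nonneg zero_le_three (mul_nonneg hgap (hg k)))
  · have hle := norm_exp_neg_sub_one_le hre
    rw [hnorm] at hle
    calc ‖Complex.exp (-(z * k)) - 1‖ * ‖e k‖
        ≤ 3 * (1 - Real.exp (-(‖z‖ * k))) * g k :=
          mul_le_mul hle (hK k (by simpa using hk)) (norm_nonneg _) (by positivity)
      _ = 0 + 3 * ((1 - Real.exp (-(‖z‖ * k))) * g k) := by ring

lemma isLittleO_tsum_exp_mul {d : ℝ} (hd : d ∈ Set.Ioo (-1) 0) {e : ℕ → ℂ} (he : HasSum e 0)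
    (hed : e =o[atTop] fun k ↦ Ring.multichoose d k) :
    (fun z : ℂ ↦ ∑' k : ℕ, Complex.exp (-z * k) * e k) =o[𝓝[{z | 0 < z.re}] 0]
      fun z : ℂ ↦ z ^ (-d : ℂ) := by
  refine isLittleO_iff.2 fun c hc ↦ ?_
  obtain ⟨K, hK⟩ := eventually_atTop.1 (hed.def (show 0 < c / 6 by positivity))
  set C : ℝ := ∑ k ∈ range K, k * ‖e k‖
  have hsmall : ∀ᶠ z : ℂ in 𝓝[{z | 0 < z.re}] 0, C * ‖z‖ ^ (1 + d) < c / 2 := by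
    have hcont : Tendsto (fun z : ℂ ↦ C * ‖z‖ ^ (1 + d)) (𝓝 0) (𝓝 0) := by
      have hd' : 0 < 1 + d := by linarith [hd.1]
      simpa [Real.zero_rpow hd'.ne'] using
        (tendsto_norm_zero.rpow_const (Or.inr hd'.le)).const_mul C
    exact (hcont.mono_left nhdsWithin_le_nhds).eventually_lt_const (by positivity)
  filter_upwards [hsmall, self_mem_nhdsWithin] with z hzC hz
  have hr : 0 < ‖z‖ := norm_pos_iff.2 fun h ↦ by simp [h] at hz
  have hhead : ‖z‖ * C ≤ c / 2 * ‖z‖ ^ (-d) := by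
    calc ‖z‖ * C = C * ‖z‖ ^ (1 + d) * ‖z‖ ^ (-d) := by
          rw [mul_assoc, ← Real.rpow_add hr, add_neg_cancel_right, Real.rpow_one, mul_comm]
      _ ≤ c / 2 * ‖z‖ ^ (-d) := by gcongr
  have htail : (1 - Real.exp (-‖z‖)) ^ (-d) ≤ ‖z‖ ^ (-d) :=
    Real.rpow_le_rpow (by simp) (by linarith [Real.add_one_le_exp (-‖z‖)])
      (neg_nonneg.2 hd.2.le)
  have hG : HasSum (fun k : ℕ ↦ (1 - Real.exp (-(‖z‖ * k))) * (c / 6 * |Ring.multichoose d k|))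
      (c / 6 * (1 - Real.exp (-‖z‖)) ^ (-d)) := by
    simpa only [mul_left_comm] using
      (hasSum_one_sub_exp_mul_abs_multichoose hd hr).mul_left (c / 6)
  rw [tsum_exp_mul_eq_tsum_exp_sub_one_mul hz.le he, ← ofReal_neg, Complex.norm_cpow_real]
  calc ‖∑' k : ℕ, (Complex.exp (-z * k) - 1) * e k‖
      ≤ ‖z‖ * C + 3 * (c / 6 * (1 - Real.exp (-‖z‖)) ^ (-d)) :=
        norm_tsum_exp_sub_one_mul_le hz.le (fun k ↦ by positivity) hK hG
    _ ≤ c / 2 * ‖z‖ ^ (-d) + 3 * (c / 6 * ‖z‖ ^ (-d)) := by gcongr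
    _ = c * ‖z‖ ^ (-d) := by ring

lemma mul_cpow_of_re_pos {z w : ℂ} (hz : 0 < z.re) (hw : 0 < w.re) (s : ℂ) :
    (z * w) ^ s = z ^ s * w ^ s := by
  have hz0 : z ≠ 0 := fun h ↦ by simp [h] at hz
  have hw0 : w ≠ 0 := fun h ↦ by simp [h] at hw
  obtain ⟨hz1, hz2⟩ := abs_lt.1 (abs_arg_lt_pi_div_two_iff.2 (Or.inl hz))
  obtain ⟨hw1, hw2⟩ := abs_lt.1 (abs_arg_lt_pi_div_two_iff.2 (Or.inl hw))
  have hlog : Complex.log (z * w) = Complex.log z + Complex.log w :=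
    Complex.log_mul hz0 hw0 ⟨by linarith, by linarith⟩
  rw [cpow_def_of_ne_zero (mul_ne_zero hz0 hw0), cpow_def_of_ne_zero hz0,
    cpow_def_of_ne_zero hw0, hlog, add_mul, Complex.exp_add]

lemma tendsto_one_sub_exp_neg_div : Tendsto (fun z : ℂ ↦ (1 - Complex.exp (-z)) / z)
    (𝓝[≠] 0) (𝓝 1) := by
  have hderiv : HasDerivAt (fun z : ℂ ↦ 1 - Complex.exp (-z)) 1 0 := by
    simpa using (hasDerivAt_neg (0 : ℂ)).cexp.const_sub 1
  simpa [slope_fun_def_field] using hderiv.tendsto_slope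

lemma tendsto_cpow_mul_one_sub_exp_neg_cpow (s : ℂ) :
    Tendsto (fun z : ℂ ↦ z ^ s * (1 - Complex.exp (-z)) ^ (-s)) (𝓝[{z | 0 < z.re}] 0) (𝓝 1) := by
  have hsub : {z : ℂ | 0 < z.re} ⊆ {0}ᶜ := fun z hz h ↦ by simp_all
  have hquot := tendsto_one_sub_exp_neg_div.mono_left (nhdsWithin_mono 0 hsub)
  have hlim : Tendsto (fun z : ℂ ↦ ((1 - Complex.exp (-z)) / z) ^ (-s))
      (𝓝[{z | 0 < z.re}] 0) (𝓝 1) := by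
    simpa using hquot.cpow (tendsto_const_nhds (x := -s)) one_mem_slitPlane
  have hre : ∀ᶠ z : ℂ in 𝓝[{z | 0 < z.re}] 0, 0 < ((1 - Complex.exp (-z)) / z).re :=
    ((continuous_re.tendsto 1).comp hquot).eventually_const_lt (by simp)
  refine hlim.congr' ?_
  filter_upwards [hre, self_mem_nhdsWithin] with z hw hz
  have hz0 : z ≠ 0 := hsub hz
  conv_rhs => rw [← mul_div_cancel₀ (1 - Complex.exp (-z)) hz0, mul_cpow_of_re_pos hz hw,
    ← mul_assoc, ← cpow_add _ _ hz0, add_neg_cancel, cpow_zero, one_mul]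

lemma tendsto_ofReal_add_I_mul_div_natCast {u : ℕ → ℝ} (hpos : ∀ n, 0 < u n)
    (hu : Tendsto u atTop (𝓝 0)) (y : ℝ) :
    Tendsto (fun n : ℕ ↦ (u n : ℂ) + Complex.I * y / n) atTop (𝓝[{z | 0 < z.re}] 0) := by
  refine tendsto_nhdsWithin_iff.2 ⟨?_, Eventually.of_forall fun n ↦ ?_⟩
  · simpa using hu.ofReal.add (tendsto_const_div_atTop_nhds_zero_nat (Complex.I * y))
  · simpa using hpos n

lemma isEquivalent_ofReal {α : Type*} {l : Filter α} {u v : α → ℝ} :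
    (fun x ↦ (u x : ℂ)) ~[l] (fun x ↦ (v x : ℂ)) ↔ u ~[l] v := by
  simp only [IsEquivalent, isLittleO_ofReal_right, ← isLittleO_ofReal_left, Pi.sub_def, ofReal_sub]

theorem stmt15_general {d : ℝ} (hd1 : -1 < d) (hd0 : d < 0) {b : ℕ → ℂ}
    (hb : b ~[atTop] fun k : ℕ ↦ ((1 / Real.Gamma d * (k : ℝ) ^ (d - 1) : ℝ) : ℂ))
    (hzero : ∑' k, b k = 0) :
    Tendsto (fun z : ℂ ↦ z ^ (d : ℂ) * ∑' k : ℕ, Complex.exp (-z * k) * b k)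
      (𝓝[{z | 0 < z.re}] 0) (𝓝 1) := by
  have hd : d ∈ Set.Ioo (-1) 0 := ⟨hd1, hd0⟩
  set a : ℕ → ℂ := fun k ↦ ((Ring.multichoose d k : ℝ) : ℂ)
  have ha : HasSum a 0 := by
    rw [← ofReal_zero]
    exact hasSum_ofReal.2 (hasSum_multichoose_zero hd0 (ne_neg_natCast_of_mem_Ioo hd))
  have hba : b ~[atTop] a :=
    hb.trans (isEquivalent_ofReal.2 (isEquivalent_multichoose (ne_neg_natCast_of_mem_Ioo hd))).symm
  have hb0 : HasSum b 0 := hzero ▸ (hba.summable_iff_nat.2 ha.summable).hasSum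
  have he : HasSum (b - a) 0 := sub_zero (0 : ℂ) ▸ hb0.sub ha
  have herr : Tendsto (fun z : ℂ ↦ z ^ (d : ℂ) * ∑' k : ℕ, Complex.exp (-z * k) * (b - a) k)
      (𝓝[{z | 0 < z.re}] 0) (𝓝 0) := by
    simpa [cpow_neg, mul_comm] using
      (isLittleO_tsum_exp_mul hd he (isLittleO_ofReal_right.1 hba.isLittleO)).tendsto_div_nhds_zero
  have hmain := (tendsto_cpow_mul_one_sub_exp_neg_cpow d).add herr
  rw [add_zero] at hmain
  refine hmain.congr' (eventually_nhdsWithin_of_forall fun z (hz : 0 < z.re) ↦ ?_)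
  have hsplit := (hasSum_exp_mul_multichoose d hz).add
    (summable_exp_neg_mul_natCast_mul hz.le he.summable).hasSum
  rw [← mul_add, ← hsplit.tsum_eq]
  congr 2 with k
  rw [← mul_add, ← ofReal_multichoose, Pi.sub_apply, add_sub_cancel]

/-- Tauberian lemma (regime `−1 < d < 0`): if `b k ~ (1/Γ(d)) k^{d−1}`, `∑ b k = 0`,
`λ_N > 0`, `λ_N → 0` and `N λ_N → λ* ∈ [0,∞)`, then for each fixed `y ∈ ℝ`,
`(λ_N + iy/N)^d ∑_{k=0}^∞ e^{−(λ_N + iy/N)k} b k → 1` as `N → ∞`. -/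
theorem stmt15 (d : ℝ) (hd1 : -1 < d) (hd0 : d < 0) (b : ℕ → ℝ)
    (hb : Tendsto (fun k : ℕ => b k / ((1 / Real.Gamma d) * (k : ℝ) ^ (d - 1)))
      atTop (nhds 1))
    (hsum : Summable b) (hzero : ∑' k, b k = 0)
    (lam : ℕ → ℝ) (hpos : ∀ N, 0 < lam N)
    (hlam0 : Tendsto lam atTop (nhds 0))
    (lamStar : ℝ) (hlamStar : 0 ≤ lamStar)
    (hNlam : Tendsto (fun N : ℕ => (N : ℝ) * lam N) atTop (nhds lamStar)) :
    ∀ y : ℝ, Tendsto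
      (fun N : ℕ =>
        ((lam N : ℂ) + Complex.I * y / N) ^ (d : ℂ) *
          ∑' k : ℕ, Complex.exp (-((lam N : ℂ) + Complex.I * y / N) * k) * (b k : ℂ))
      atTop (nhds 1) := fun y ↦
  (stmt15_general hd1 hd0 (isEquivalent_ofReal.2 (isEquivalent_of_tendsto_one hb))
    (by rw [← ofReal_tsum, hzero, ofReal_zero])).comp
    (tendsto_ofReal_add_I_mul_div_natCast hpos hlam0 y)
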